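/- arXiv:1211.0333 — 2 statements merged into one kernel-verified Lean document; each statement's English description precedes it below -/
import Mathlib

section
/- Let H ≤ G be a subgroup such that the index |G:H| is invertible in k. Then a finitely generated ΛG-module M is projective if and only if its restriction M↓ to ΛH is a projective ΛH-module; consequently the global dimensions of ΛG and ΛH are equal. -/
set_option maxHeartbeats 1000000

noncomputable section
open Finset
open scoped Classical


section CoreSGA

variable {k : Type} [CommRing k] {Λ : Type} [Ring Λ] [Algebra k Λ]
variable {G : Type} [Group G] [Fintype G]

/-- The skew group algebra `Λ ⊗_k kG` (as functions `G → Λ`), with multiplication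
`(λ ⊗ g) ⬝ (μ ⊗ h) = λ · g(μ) ⊗ gh`. -/
structure SGA (σ : G →* (Λ ≃ₐ[k] Λ)) : Type where
  toFun : G → Λ

namespace SGA

variable {σ : G →* (Λ ≃ₐ[k] Λ)}

@[simp] lemma mk_toFun (f : G → Λ) : (SGA.mk f : SGA σ).toFun = f := rfl

@[ext] lemma ext {f h : SGA σ} (w : ∀ g, f.toFun g = h.toFun g) : f = h := by
  cases f; cases h; simp only [mk.injEq]; funext g; exact w g

/-- The underlying-function equivalence. -/
def equivFun : SGA σ ≃ (G → Λ) := ⟨toFun, mk, fun _ => rfl, fun _ => rfl⟩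

instance : AddCommGroup (SGA σ) := (equivFun (σ := σ)).addCommGroup

@[simp] lemma toFun_add (f h : SGA σ) (g : G) : (f + h).toFun g = f.toFun g + h.toFun g := rfl
@[simp] lemma toFun_zero (g : G) : (0 : SGA σ).toFun g = 0 := rfl
@[simp] lemma toFun_neg (f : SGA σ) (g : G) : (-f).toFun g = -(f.toFun g) := rfl

instance : Mul (SGA σ) :=
  ⟨fun f h => ⟨fun x => ∑ g : G, f.toFun g * σ g (h.toFun (g⁻¹ * x))⟩⟩

instance : One (SGA σ) := ⟨⟨fun x => if x = 1 then 1 else 0⟩⟩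

@[simp] lemma toFun_mul (f h : SGA σ) (x : G) :
    (f * h).toFun x = ∑ g : G, f.toFun g * σ g (h.toFun (g⁻¹ * x)) := rfl

lemma toFun_one (x : G) : (1 : SGA σ).toFun x = if x = 1 then 1 else 0 := rfl

protected lemma one_mul (f : SGA σ) : 1 * f = f := by
  ext x
  rw [toFun_mul]
  rw [Finset.sum_eq_single (1 : G)]
  · simp [toFun_one]
  · intro b _ hb
    simp [toFun_one, hb]
  · simp

protected lemma mul_one (f : SGA σ) : f * 1 = f := by
  ext x
  rw [toFun_mul]
  rw [Finset.sum_eq_single (x : G)]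
  · simp [toFun_one]
  · intro b _ hb
    have : b⁻¹ * x ≠ 1 := by
      intro hc
      rw [inv_mul_eq_one] at hc
      exact hb hc
    simp [toFun_one, this]
  · simp

protected lemma mul_assoc (f h e : SGA σ) : f * h * e = f * (h * e) := by
  ext x
  rw [toFun_mul, toFun_mul]
  simp only [toFun_mul, Finset.sum_mul, map_sum, Finset.mul_sum, map_mul]
  rw [Finset.sum_comm]
  refine Finset.sum_congr rfl fun u _ => ?_
  rw [← Fintype.sum_equiv (Equiv.mulLeft u)
    (fun v => f.toFun u * σ u (h.toFun v) * σ (u * v) (e.toFun ((u * v)⁻¹ * x)))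
    (fun g => f.toFun u * σ u (h.toFun (u⁻¹ * g)) * σ g (e.toFun (g⁻¹ * x)))
    (fun v => by simp [Equiv.mulLeft])]
  refine Finset.sum_congr rfl fun v _ => ?_
  have h3 : (u * v)⁻¹ * x = v⁻¹ * (u⁻¹ * x) := by group
  have h4 : σ u (σ v (e.toFun (v⁻¹ * (u⁻¹ * x)))) = σ (u * v) (e.toFun (v⁻¹ * (u⁻¹ * x))) := by
    rw [map_mul σ]; rfl
  rw [h3, ← h4, mul_assoc]

protected lemma left_distrib (f h e : SGA σ) : f * (h + e) = f * h + f * e := by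
  ext x
  simp [mul_add, Finset.sum_add_distrib]

protected lemma right_distrib (f h e : SGA σ) : (f + h) * e = f * e + h * e := by
  ext x
  simp [add_mul, Finset.sum_add_distrib]

protected lemma zero_mul (f : SGA σ) : 0 * f = 0 := by
  ext x; simp

protected lemma mul_zero (f : SGA σ) : f * 0 = 0 := by
  ext x; simp

instance instRing : Ring (SGA σ) :=
  { (inferInstance : AddCommGroup (SGA σ)),
    (inferInstance : Mul (SGA σ)), (inferInstance : One (SGA σ)) with
    mul_assoc := SGA.mul_assoc
    one_mul := SGA.one_mul
    mul_one := SGA.mul_one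
    left_distrib := SGA.left_distrib
    right_distrib := SGA.right_distrib
    zero_mul := SGA.zero_mul
    mul_zero := SGA.mul_zero }

/-- The canonical inclusion `Λ → ΛG`, `λ ↦ λ ⊗ 1`. -/
def emb (σ : G →* (Λ ≃ₐ[k] Λ)) : Λ →+* SGA σ where
  toFun a := ⟨fun x => if x = 1 then a else 0⟩
  map_one' := rfl
  map_zero' := by ext x; simp
  map_add' a b := by ext x; by_cases hx : x = 1 <;> simp [hx]
  map_mul' a b := by
    ext x
    rw [toFun_mul]
    rw [Finset.sum_eq_single (1 : G)]
    · by_cases hx : x = 1 <;> simp [hx]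
    · intro b' _ hb'; simp [hb']
    · simp

end SGA

end CoreSGA

section GeneralDefs

/-- An idempotent `e` is primitive if it is nonzero and cannot be written as a sum of two
nonzero orthogonal idempotents. -/
def IsPrimitiveIdempotent (A : Type) [Ring A] (e : A) : Prop :=
  IsIdempotentElem e ∧ e ≠ 0 ∧
    ∀ f g : A, IsIdempotentElem f → IsIdempotentElem g → f * g = 0 → g * f = 0 →
      e = f + g → f = 0 ∨ g = 0

/-- A finite family `e : Fin n → A` is a complete set of primitive orthogonal idempotents. -/
def IsCompletePrimitiveOrthogonalSystem (A : Type) [Ring A] {n : ℕ} (e : Fin n → A) : Prop :=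
  (∀ i, IsPrimitiveIdempotent A (e i)) ∧
    (∀ i j, i ≠ j → e i * e j = 0) ∧ (∑ i, e i = 1)

/-- A ring is connected (indecomposable as an algebra) if its only central idempotents
are `0` and `1`. -/
def IsConnectedRing (A : Type) [Ring A] : Prop :=
  Nontrivial A ∧ ∀ e : A, IsIdempotentElem e → (∀ x : A, e * x = x * e) → e = 0 ∨ e = 1

/-- A ring is basic if it admits a complete set of primitive orthogonal idempotents `e i`
such that the indecomposable projective left modules `A e i` are pairwise nonisomorphic. -/
def IsBasicRing (A : Type) [Ring A] : Prop :=
  ∃ (n : ℕ) (e : Fin n → A), IsCompletePrimitiveOrthogonalSystem A e ∧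
    ∀ i j, i ≠ j →
      IsEmpty ((Submodule.span A {e i} : Submodule A A) ≃ₗ[A] (Submodule.span A {e j} : Submodule A A))

/-- `projDimLE A n M` : the `A`-module `M` admits a projective resolution of length at
most `n`, i.e. has projective dimension `≤ n`. -/
def projDimLE (A : Type) [Ring A] (n : ℕ) (M : Type) [AddCommGroup M] [Module A M] : Prop :=
  ∃ (P : ℕ → ModuleCat.{0} A) (d : (i : ℕ) → (P (i + 1) →ₗ[A] P i)) (ε : P 0 →ₗ[A] M),
    (∀ i, Module.Projective A (P i)) ∧
    Function.Surjective ε ∧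
    LinearMap.range (d 0) = LinearMap.ker ε ∧
    (∀ i, LinearMap.range (d (i + 1)) = LinearMap.ker (d i)) ∧
    (∀ i, n < i → ∀ x : P i, x = 0)

/-- The (little) global dimension of a ring, as an element of `ℕ∞`: the least `n` such that
every finitely generated `A`-module has projective dimension at most `n` (and `⊤` if there
is no such `n`). -/
noncomputable def globalDim (A : Type) [Ring A] : ℕ∞ :=
  sInf {c : ℕ∞ | ∃ n : ℕ, c = (n : ℕ∞) ∧
    ∀ (M : Type) [AddCommGroup M] [Module A M], Module.Finite A M → projDimLE A n M}

/-- A module is indecomposable if it is nonzero and is not the internal direct sum of two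
nonzero submodules. -/
def IsIndecomposableModule (A : Type) [Ring A] (M : Type) [AddCommGroup M] [Module A M] : Prop :=
  Nontrivial M ∧ ∀ N₁ N₂ : Submodule A M, IsCompl N₁ N₂ → N₁ = ⊥ ∨ N₂ = ⊥

/-- A ring has finite representation type if there are only finitely many isomorphism classes
of finitely generated indecomposable left modules. -/
def FiniteRepType (A : Type) [Ring A] : Prop :=
  ∃ S : Set (Σ m : ℕ, Submodule A (Fin m → A)), S.Finite ∧
    ∀ (M : Type) [AddCommGroup M] [Module A M], Module.Finite A M →
      IsIndecomposableModule A M →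
        ∃ p ∈ S, Nonempty (M ≃ₗ[A] ((Fin p.1 → A) ⧸ p.2))

/-- Two rings are Morita equivalent if their categories of modules are equivalent. -/
def MoritaEquivalent (A B : Type) [Ring A] [Ring B] : Prop :=
  Nonempty (ModuleCat.{0} A ≌ ModuleCat.{0} B)

/-- An Auslander algebra: global dimension at most `2`, and there is an exact sequence
`0 → A → I₀ → I₁` with `I₀`, `I₁` both projective and injective (equivalently, in a minimal
injective resolution `0 → A → I₀ → I₁ → I₂ → 0` the terms `I₀` and `I₁` are projective). -/
def IsAuslanderAlgebra (A : Type) [Ring A] : Prop :=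
  globalDim A ≤ 2 ∧
    ∃ (I₀ I₁ : ModuleCat.{0} A) (f : A →ₗ[A] I₀) (g : I₀ →ₗ[A] I₁),
      Module.Injective A I₀ ∧ Module.Projective A I₀ ∧
      Module.Injective A I₁ ∧ Module.Projective A I₁ ∧
      Function.Injective f ∧ LinearMap.ker g = LinearMap.range f

/-- The `i`-th power of a left ideal (with `I ^ 0 = ⊤`). -/
def leftIdealPow (A : Type) [Ring A] (I : Submodule A A) : ℕ → Submodule A A
  | 0 => ⊤
  | n + 1 => Submodule.span A {x : A | ∃ a ∈ I, ∃ b ∈ leftIdealPow A I n, x = a * b}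

end GeneralDefs
section Restriction

/-- Restriction of scalars along a ring homomorphism, as a type synonym. -/
def Res {A B : Type} [Ring A] [Ring B] (φ : A →+* B) (M : Type) : Type := M

instance {A B : Type} [Ring A] [Ring B] (φ : A →+* B) (M : Type) [AddCommGroup M] :
    AddCommGroup (Res φ M) := inferInstanceAs (AddCommGroup M)

instance {A B : Type} [Ring A] [Ring B] (φ : A →+* B) (M : Type) [AddCommGroup M] [Module B M] :
    Module A (Res φ M) := Module.compHom M φ

end Restriction

section Induction

variable {A B : Type} [Ring A] [Ring B] (φ : A →+* B)
variable (V : Type) [AddCommGroup V] [Module A V]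

/-- The submodule of relations defining the induced module `B ⊗_A V`. -/
def inducedRelations : Submodule B (V →₀ B) :=
  Submodule.span B
    {z | ∃ (a : A) (v : V), z = Finsupp.single (a • v) (1 : B) - Finsupp.single v (φ a)}

/-- The induced module `B ⊗_A V` along `φ : A →+* B`, realized as a quotient of the free
module on `V`. -/
def Induced : Type := (V →₀ B) ⧸ inducedRelations φ V

instance : AddCommGroup (Induced φ V) :=
  inferInstanceAs (AddCommGroup ((V →₀ B) ⧸ inducedRelations φ V))

instance : Module B (Induced φ V) :=
  inferInstanceAs (Module B ((V →₀ B) ⧸ inducedRelations φ V))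

end Induction
section SubEmb

namespace SGA

variable {k : Type} [CommRing k] {Λ : Type} [Ring Λ] [Algebra k Λ]
variable {G : Type} [Group G] [Fintype G]

/-- For a subgroup `H ≤ G`, the subalgebra inclusion `ΛH → ΛG`. -/
def subEmb (σ : G →* (Λ ≃ₐ[k] Λ)) (H : Subgroup G) [Fintype H] :
    SGA (σ.comp H.subtype) →+* SGA σ where
  toFun f := ⟨fun g => if hg : g ∈ H then f.toFun ⟨g, hg⟩ else 0⟩
  map_one' := by
    ext x
    simp only [mk_toFun]
    by_cases hx : x ∈ H
    · rw [dif_pos hx, toFun_one, toFun_one]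
      by_cases h1 : x = 1
      · subst h1; simp
      · rw [if_neg h1, if_neg (fun hc => h1 (by simpa [Subtype.ext_iff] using hc))]
    · rw [dif_neg hx, toFun_one,
        if_neg (fun h1 : x = 1 => hx (by rw [h1]; exact H.one_mem))]
  map_zero' := by
    ext x
    simp only [mk_toFun, toFun_zero]
    by_cases hx : x ∈ H <;> simp [hx]
  map_add' f h := by
    ext x
    simp only [mk_toFun, toFun_add]
    by_cases hx : x ∈ H <;> simp [hx]
  map_mul' f h := by
    ext x
    simp only [mk_toFun, toFun_mul]
    by_cases hx : x ∈ H
    · rw [dif_pos hx]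
      rw [← Finset.sum_filter_add_sum_filter_not Finset.univ (· ∈ H)
        (fun g => (if hg : g ∈ H then f.toFun ⟨g, hg⟩ else 0) *
          σ g ((if hg' : g⁻¹ * x ∈ H then h.toFun ⟨g⁻¹ * x, hg'⟩ else 0)))]
      have h2 : ∑ g ∈ Finset.univ.filter (fun g => ¬ g ∈ H),
          (if hg : g ∈ H then f.toFun ⟨g, hg⟩ else 0) *
            σ g ((if hg' : g⁻¹ * x ∈ H then h.toFun ⟨g⁻¹ * x, hg'⟩ else 0)) = 0 := by
        refine Finset.sum_eq_zero fun g hg => ?_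
        rw [Finset.mem_filter] at hg
        rw [dif_neg hg.2, zero_mul]
      rw [h2, add_zero]
      rw [Finset.sum_subtype (p := (· ∈ H)) (Finset.univ.filter (· ∈ H)) (by simp)
        (fun g => (if hg : g ∈ H then f.toFun ⟨g, hg⟩ else 0) *
          σ g ((if hg' : g⁻¹ * x ∈ H then h.toFun ⟨g⁻¹ * x, hg'⟩ else 0)))]
      refine Finset.sum_congr rfl fun u _ => ?_
      rw [dif_pos u.2, dif_pos (H.mul_mem (H.inv_mem u.2) hx)]
      rfl
    · rw [dif_neg hx]
      refine (Finset.sum_eq_zero fun g _ => ?_).symm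
      by_cases hg : g ∈ H
      · have hgx : g⁻¹ * x ∉ H := by
          intro hc
          exact hx (by simpa using H.mul_mem hg hc)
        rw [dif_neg hgx, map_zero, mul_zero]
      · rw [dif_neg hg, zero_mul]

end SGA

end SubEmb

/-!
`ΛG` is a Frobenius extension of `ΛH`: the coefficient projection `π : ΛG → ΛH` has the dual bases
`1 ⊗ g` and `1 ⊗ g⁻¹`, with `g` running through representatives of `G ⧸ H`. Its index
`∑ (1 ⊗ g) (1 ⊗ g⁻¹)` is the integer `|G : H|`, and `π` splits the inclusion `ΛH → ΛG`.

For any Frobenius extension `A → B` the algebra `B` is projective over `A`, so restriction preserves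
projectives. If the index is a unit, averaging an `A`-linear section of a `B`-linear surjection over
the dual bases gives a `B`-linear one, so restriction also reflects projectives; by dimension
shifting it then preserves projective dimensions, whence `gldim B ≤ gldim A`. Since `π` splits the
extension, every `A`-module is a direct summand of the restriction of a coinduced `B`-module,
whence `gldim A ≤ gldim B`.
-/

section ProjectiveDimension

open CategoryTheory

variable {A : Type} [Ring A] {M N P : Type} [AddCommGroup M] [Module A M] [AddCommGroup N]
  [Module A N] [AddCommGroup P] [Module A P] {n : ℕ}

lemma projective_of_projDimLE_zero (h : projDimLE A 0 M) : Module.Projective A M := by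
  obtain ⟨P, d, ε, hP, hε, hd, -, hzero⟩ := h
  have hker : LinearMap.ker ε = ⊥ := by
    rw [← hd, LinearMap.range_eq_bot]
    ext x
    simp [hzero 1 one_pos x]
  have := hP 0
  exact .of_equiv' (.ofBijective ε ⟨LinearMap.ker_eq_bot.1 hker, hε⟩)

lemma projDimLE_zero_of_projective [h : Module.Projective A M] : projDimLE A 0 M := by
  refine ⟨fun | 0 => .of A M | _ + 1 => .of A PUnit, fun _ => 0, (LinearMap.id : M →ₗ[A] M),
    ?_, Function.surjective_id, ?_, fun i => ?_, ?_⟩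
  · rintro (_ | i)
    · exact h
    · exact inferInstanceAs (Module.Projective A PUnit)
  · simp
  · exact Subsingleton.elim (α := Submodule A PUnit) _ _
  · rintro (_ | i) hi x
    · exact absurd hi (lt_irrefl 0)
    · exact Subsingleton.elim (α := PUnit) _ _

lemma exists_projDimLE_ker_of_projDimLE_succ (h : projDimLE A (n + 1) M) :
    ∃ (P : ModuleCat.{0} A) (g : P →ₗ[A] M), Module.Projective A P ∧ Function.Surjective g ∧
      projDimLE A n (LinearMap.ker g) := by
  obtain ⟨P, d, ε, hP, hε, hd, hexact, hzero⟩ := h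
  refine ⟨P 0, ε, hP 0, hε, fun i => P (i + 1), fun i => d (i + 1),
    (d 0).codRestrict (LinearMap.ker ε) fun x => hd ▸ LinearMap.mem_range_self _ x,
    fun i => hP _, ?_, ?_, fun i => hexact _, fun i hi => hzero _ (Nat.succ_lt_succ hi)⟩
  · rw [← LinearMap.range_eq_top, LinearMap.range_codRestrict, hd, Submodule.comap_subtype_self]
  · rw [LinearMap.ker_codRestrict, hexact 0]

lemma projDimLE_succ_of_projDimLE_ker [hP : Module.Projective A P] (g : P →ₗ[A] M)
    (hg : Function.Surjective g) (h : projDimLE A n (LinearMap.ker g)) : projDimLE A (n + 1) M := by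
  obtain ⟨Q, d, ε, hQ, hε, hd, hexact, hzero⟩ := h
  refine ⟨fun | 0 => .of A P | i + 1 => Q i,
    fun | 0 => (LinearMap.ker g).subtype ∘ₗ ε | i + 1 => d i, g, ?_, hg, ?_, ?_, ?_⟩
  · rintro (_ | i)
    exacts [hP, hQ i]
  · exact (LinearMap.range_comp_of_range_eq_top _ (LinearMap.range_eq_top.2 hε)).trans
      (Submodule.range_subtype _)
  · rintro (_ | i)
    · exact hd.trans (LinearMap.ker_comp_of_ker_eq_bot _ (Submodule.ker_subtype _)).symm
    · exact hexact i
  · rintro (_ | i) hi x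
    · exact absurd hi (Nat.not_lt_zero _)
    · exact hzero i (Nat.lt_of_succ_lt_succ hi) x

lemma hasProjectiveDimensionLT_succ_iff_ker [hP : Module.Projective A P] (g : P →ₗ[A] M)
    (hg : Function.Surjective g) :
    HasProjectiveDimensionLT (ModuleCat.of A M) (n + 2) ↔
      HasProjectiveDimensionLT (ModuleCat.of A (LinearMap.ker g)) (n + 1) :=
  (LinearMap.shortExact_shortComplexKer hg).hasProjectiveDimensionLT_X₃_iff n
    ((IsProjective.iff_projective P).1 hP)

lemma hasProjectiveDimensionLT_one_iff_projective :
    HasProjectiveDimensionLT (ModuleCat.of A M) 1 ↔ Module.Projective A M := by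
  rw [IsProjective.iff_projective, projective_iff_hasProjectiveDimensionLT_one]

lemma projDimLE_iff_hasProjectiveDimensionLT :
    projDimLE A n M ↔ HasProjectiveDimensionLT (ModuleCat.of A M) (n + 1) := by
  induction n generalizing M with
  | zero =>
    rw [hasProjectiveDimensionLT_one_iff_projective]
    exact ⟨projective_of_projDimLE_zero, fun _ => projDimLE_zero_of_projective⟩
  | succ n ih =>
    constructor
    · intro h
      obtain ⟨P, g, hP, hg, hker⟩ := exists_projDimLE_ker_of_projDimLE_succ h
      exact (hasProjectiveDimensionLT_succ_iff_ker g hg).2 (ih.1 hker)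
    · have hp := Finsupp.linearCombination_id_surjective A M
      rw [hasProjectiveDimensionLT_succ_iff_ker _ hp, ← ih]
      exact projDimLE_succ_of_projDimLE_ker _ hp

lemma projDimLE_zero_iff : projDimLE A 0 M ↔ Module.Projective A M :=
  projDimLE_iff_hasProjectiveDimensionLT.trans hasProjectiveDimensionLT_one_iff_projective

lemma projDimLE_succ_iff_ker [Module.Projective A P] (g : P →ₗ[A] M)
    (hg : Function.Surjective g) : projDimLE A (n + 1) M ↔ projDimLE A n (LinearMap.ker g) := by
  rw [projDimLE_iff_hasProjectiveDimensionLT, projDimLE_iff_hasProjectiveDimensionLT,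
    hasProjectiveDimensionLT_succ_iff_ker g hg]

lemma projDimLE.of_retract (i : M →ₗ[A] N) (r : N →ₗ[A] M) (h : r ∘ₗ i = LinearMap.id)
    (hN : projDimLE A n N) : projDimLE A n M := by
  rw [projDimLE_iff_hasProjectiveDimensionLT] at hN ⊢
  have retract : Retract (ModuleCat.of A M) (ModuleCat.of A N) :=
    { i := ModuleCat.ofHom i
      r := ModuleCat.ofHom r
      retract := ModuleCat.hom_ext h }
  exact retract.hasProjectiveDimensionLT _

lemma globalDim_le_of_forall_projDimLE {B : Type} [Ring B]
    (h : ∀ n, (∀ (M : Type) [AddCommGroup M] [Module B M], Module.Finite B M → projDimLE B n M) →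
      ∀ (N : Type) [AddCommGroup N] [Module A N], Module.Finite A N → projDimLE A n N) :
    globalDim A ≤ globalDim B := by
  refine le_sInf ?_
  rintro _ ⟨n, rfl, hn⟩
  exact sInf_le ⟨n, rfl, h n hn⟩

end ProjectiveDimension

lemma projective_trans {A : Type*} (B : Type*) {M : Type*} [Semiring A] [Semiring B] [Module A B]
    [AddCommMonoid M] [Module B M] [Module A M] [IsScalarTower A B B] [IsScalarTower A B M]
    [Module.Projective A B] [Module.Projective B M] : Module.Projective A M := by
  obtain ⟨s, hs⟩ := Module.projective_def'.1 ‹Module.Projective B M›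
  have : Module.Projective A (M →₀ B) := .of_equiv' (finsuppLequivDFinsupp (M := B) A).symm
  exact .of_split (s.restrictScalars A)
    ((Finsupp.linearCombination B (id : M → M)).restrictScalars A)
    (LinearMap.ext fun m => LinearMap.congr_fun hs m)

/-- The coinduced module `Hom_A(B, N)`, with `B` acting by `(b • f) x = f (x * b)`. -/
def Coinduced (A B N : Type*) [Ring A] [Ring B] [Module A B] [AddCommGroup N] [Module A N] :
    Type _ :=
  B →ₗ[A] N

namespace Coinduced

variable {A B N : Type*} [Ring A] [Ring B] [Module A B] [AddCommGroup N] [Module A N]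

instance : AddCommGroup (Coinduced A B N) := inferInstanceAs (AddCommGroup (B →ₗ[A] N))

instance : FunLike (Coinduced A B N) B N := inferInstanceAs (FunLike (B →ₗ[A] N) B N)

instance : LinearMapClass (Coinduced A B N) A B N :=
  inferInstanceAs (LinearMapClass (B →ₗ[A] N) A B N)

@[ext] lemma ext {f g : Coinduced A B N} (h : ∀ x, f x = g x) : f = g := LinearMap.ext h

lemma add_apply (f g : Coinduced A B N) (x : B) : (f + g) x = f x + g x := rfl

lemma sum_apply {ι : Type*} (s : Finset ι) (f : ι → Coinduced A B N) (x : B) :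
    (∑ i ∈ s, f i) x = ∑ i ∈ s, f i x :=
  LinearMap.sum_apply s f x

variable [IsScalarTower A B B]

instance : SMul B (Coinduced A B N) where
  smul b f := LinearMap.comp (M₂ := B) f ((LinearMap.toSpanSingleton B B b).restrictScalars A)

lemma smul_apply (b : B) (f : Coinduced A B N) (x : B) : (b • f) x = f (x * b) := rfl

instance : Module B (Coinduced A B N) where
  one_smul f := by ext x; simp only [smul_apply, mul_one]
  mul_smul b c f := by ext x; simp only [smul_apply, mul_assoc]
  smul_zero b := rfl
  smul_add b f g := rfl
  add_smul b c f := by ext x; simp only [smul_apply, add_apply, mul_add, map_add]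
  zero_smul f := by ext x; rw [smul_apply, mul_zero, map_zero]; rfl

instance : Module A (Coinduced A B N) := Module.compHom _ (RingHom.smulOneHom : A →+* B)

instance : IsScalarTower A B (Coinduced A B N) where
  smul_assoc a b f := by
    rw [← smul_one_mul a b, mul_smul]
    rfl

lemma base_smul_apply (a : A) (f : Coinduced A B N) (x : B) : (a • f) x = f (x * a • 1) := rfl

/-- The embedding `N → Hom_A(B, N)`, `v ↦ (x ↦ π x • v)`, attached to a bimodule map
`π : B → A`. -/
def of (π : B →ₗ[A] A) (hπ : ∀ x a, π (x * a • 1) = π x * a) : N →ₗ[A] Coinduced A B N where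
  toFun v := π.smulRight v
  map_add' v w := by ext x; exact smul_add _ _ _
  map_smul' a v := by
    ext x
    change π x • a • v = π (x * a • 1) • v
    rw [hπ, mul_smul]

lemma of_apply (π : B →ₗ[A] A) (hπ : ∀ x a, π (x * a • 1) = π x * a) (v : N) (x : B) :
    of π hπ v x = π x • v := rfl

/-- The counit `Hom_A(B, N) → N`, evaluation at `1`. -/
def eval : Coinduced A B N →ₗ[A] N where
  toFun f := f 1
  map_add' _ _ := rfl
  map_smul' a f := by rw [base_smul_apply, one_mul, map_smul, RingHom.id_apply]

lemma eval_comp_of (π : B →ₗ[A] A) (hπ : ∀ x a, π (x * a • 1) = π x * a) (h1 : π 1 = 1) :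
    eval ∘ₗ of π hπ = (LinearMap.id : N →ₗ[A] N) := by
  ext v
  change π 1 • v = v
  rw [h1, one_smul]

end Coinduced

/-- A Frobenius system for a ring extension `A → B`, `a ↦ a • 1`: a bimodule map `π : B → A` with
dual bases `b` and `c`. The extension is encoded by the scalar action of `A` on `B`. -/
structure FrobeniusSystem (A B ι : Type*) [Ring A] [Ring B] [Module A B] [Fintype ι] where
  π : B →ₗ[A] A
  π_mul_smul_one : ∀ x a, π (x * a • 1) = π x * a
  b : ι → B
  c : ι → B
  sum_π_mul_smul : ∀ x, ∑ i, π (x * b i) • c i = x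
  sum_mul_π_smul_one : ∀ x, ∑ i, b i * (π (c i * x) • 1) = x

namespace FrobeniusSystem

variable {A B ι : Type*} [Ring A] [Ring B] [Module A B] [Fintype ι] (F : FrobeniusSystem A B ι)

/-- The index of the Frobenius system, the image of its Casimir element `∑ bᵢ ⊗ cᵢ` under
multiplication. -/
def index : B := ∑ i, F.b i * F.c i

section Modules

variable {M N : Type*} [AddCommGroup M] [Module A M] [Module B M] [IsScalarTower A B M]
  [AddCommGroup N] [Module A N] [Module B N] [IsScalarTower A B N]

lemma smul_eq_sum_π_mul_smul (x : B) (m : M) : x • m = ∑ i, F.π (x * F.b i) • F.c i • m := by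
  conv_lhs => rw [← F.sum_π_mul_smul x, Finset.sum_smul]
  simp only [smul_assoc]

lemma smul_eq_sum_smul_π (x : B) (m : M) : x • m = ∑ i, F.b i • F.π (F.c i * x) • m := by
  conv_lhs => rw [← F.sum_mul_π_smul_one x, Finset.sum_smul]
  simp only [mul_smul, smul_assoc, one_smul]

lemma sum_smul_map_smul (f : M →ₗ[A] N) (x : B) (m : M) :
    ∑ i, F.b i • f (F.c i • x • m) = x • ∑ i, F.b i • f (F.c i • m) :=
  calc ∑ i, F.b i • f (F.c i • x • m)
      = ∑ i, ∑ j, F.b i • F.π (F.c i * (x * F.b j)) • f (F.c j • m) := by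
        refine Finset.sum_congr rfl fun i _ => ?_
        rw [← mul_smul, F.smul_eq_sum_π_mul_smul (F.c i * x), map_sum, Finset.smul_sum]
        simp only [map_smul, mul_assoc]
    _ = ∑ j, (x * F.b j) • f (F.c j • m) := by
        rw [Finset.sum_comm]
        simp only [← F.smul_eq_sum_smul_π]
    _ = x • ∑ i, F.b i • f (F.c i • m) := by
        simp only [Finset.smul_sum, mul_smul]

/-- The transfer (relative trace) of an `A`-linear map between `B`-modules. -/
def transfer (f : M →ₗ[A] N) : M →ₗ[B] N where
  toFun m := ∑ i, F.b i • f (F.c i • m)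
  map_add' m m' := by simp only [smul_add, map_add, Finset.sum_add_distrib]
  map_smul' := F.sum_smul_map_smul f

lemma transfer_apply (f : M →ₗ[A] N) (m : M) :
    F.transfer f m = ∑ i, F.b i • f (F.c i • m) := rfl

lemma transfer_id_apply (m : M) : F.transfer (LinearMap.id : M →ₗ[A] M) m = F.index • m := by
  simp only [transfer_apply, index, LinearMap.id_apply, Finset.sum_smul, mul_smul]

lemma comp_transfer {P : Type*} [AddCommGroup P] [Module A P] [Module B P] [IsScalarTower A B P]
    (g : N →ₗ[B] P) (f : M →ₗ[A] N) :
    g ∘ₗ F.transfer f = F.transfer (g.restrictScalars A ∘ₗ f) := by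
  ext m
  simp [transfer_apply]

include F in
lemma projective_of_projective_restrict [IsScalarTower A B B] (hF : IsUnit F.index)
    [Module.Projective A M] : Module.Projective B M := by
  let p := Finsupp.linearCombination B (id : M → M)
  obtain ⟨s, hs⟩ := Module.projective_lifting_property (p.restrictScalars A) LinearMap.id
    (Finsupp.linearCombination_id_surjective B M)
  have hbij : Function.Bijective (F.transfer (LinearMap.id : M →ₗ[A] M)) := by
    simpa only [funext F.transfer_id_apply] using hF.smul_bijective
  let e : M ≃ₗ[B] M := .ofBijective _ hbij
  refine .of_split (F.transfer s) (e.symm ∘ₗ p) ?_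
  rw [LinearMap.comp_assoc, F.comp_transfer, hs]
  exact e.symm_comp

end Modules

variable [IsScalarTower A B B]

/-- The coordinates `x ↦ (π (x * bᵢ))ᵢ` with respect to the generators `cᵢ` of `B` over `A`. -/
def coords : B →ₗ[A] ι → A :=
  LinearMap.pi fun i => F.π ∘ₗ (LinearMap.toSpanSingleton B B (F.b i)).restrictScalars A

lemma linearCombination_comp_coords :
    Fintype.linearCombination A F.c ∘ₗ F.coords = LinearMap.id :=
  LinearMap.ext F.sum_π_mul_smul

include F in
lemma projective : Module.Projective A B :=
  .of_split F.coords _ F.linearCombination_comp_coords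

include F in
lemma finite : Module.Finite A B :=
  .of_surjective _ (LinearMap.surjective_of_comp_eq_id _ _ F.linearCombination_comp_coords)

include F in
lemma projective_iff_projective_restrict (hF : IsUnit F.index) {M : Type*} [AddCommGroup M]
    [Module A M] [Module B M] [IsScalarTower A B M] :
    Module.Projective B M ↔ Module.Projective A M :=
  have := F.projective
  ⟨fun _ => projective_trans B, fun _ => F.projective_of_projective_restrict hF⟩

lemma coinduced_eq_sum_smul_of {N : Type*} [AddCommGroup N] [Module A N]
    (f : Coinduced A B N) :
    f = ∑ i, F.b i • Coinduced.of F.π F.π_mul_smul_one (f (F.c i)) := by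
  ext x
  conv_lhs => rw [← F.sum_π_mul_smul x, map_sum]
  simp only [map_smul, Coinduced.sum_apply, Coinduced.smul_apply, Coinduced.of_apply]

include F in
lemma finite_coinduced {N : Type*} [AddCommGroup N] [Module A N] [Module.Finite A N] :
    Module.Finite B (Coinduced A B N) := by
  obtain ⟨S, hS⟩ := Module.Finite.fg_top (R := A) (M := N)
  let ofπ : N →ₗ[A] Coinduced A B N := Coinduced.of F.π F.π_mul_smul_one
  have hof (v : N) : ofπ v ∈ Submodule.span B (ofπ '' S) := by
    refine Submodule.span_subset_span A B _ ?_
    rw [← Submodule.map_span, hS]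
    exact Submodule.mem_map_of_mem Submodule.mem_top
  refine ⟨Submodule.fg_def.2 ⟨_, S.finite_toSet.image ofπ, eq_top_iff.2 fun f _ => ?_⟩⟩
  rw [F.coinduced_eq_sum_smul_of f]
  exact Submodule.sum_mem _ fun i _ => Submodule.smul_mem _ _ (hof _)

end FrobeniusSystem

namespace FrobeniusSystem

variable {A B : Type} {ι : Type*} [Ring A] [Ring B] [Module A B] [IsScalarTower A B B] [Fintype ι]
  (F : FrobeniusSystem A B ι)

include F in
lemma projDimLE_iff_projDimLE_restrict (hF : IsUnit F.index) (n : ℕ) {M : Type} [AddCommGroup M]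
    [Module A M] [Module B M] [IsScalarTower A B M] : projDimLE B n M ↔ projDimLE A n M := by
  induction n generalizing M with
  | zero => rw [projDimLE_zero_iff, projDimLE_zero_iff, F.projective_iff_projective_restrict hF]
  | succ n ih =>
    let p := Finsupp.linearCombination B (id : M → M)
    have hp : Function.Surjective p := Finsupp.linearCombination_id_surjective B M
    have : Module.Projective A (M →₀ B) :=
      (F.projective_iff_projective_restrict hF).1 inferInstance
    rw [projDimLE_succ_iff_ker p hp, ih, projDimLE_succ_iff_ker (p.restrictScalars A) hp]
    rfl

include F in
lemma globalDim_le_globalDim_base (hF : IsUnit F.index) : globalDim B ≤ globalDim A := by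
  refine globalDim_le_of_forall_projDimLE fun n h M _ _ _ => ?_
  let : Module A M := Module.compHom M (RingHom.smulOneHom : A →+* B)
  have : IsScalarTower A B M := ⟨fun a b m => by rw [← smul_one_mul a b, mul_smul]; rfl⟩
  have := F.finite
  exact (F.projDimLE_iff_projDimLE_restrict hF n).2 (h M (.trans B M))

include F in
lemma globalDim_base_le_globalDim (hF : IsUnit F.index) (hπ : F.π 1 = 1) :
    globalDim A ≤ globalDim B := by
  refine globalDim_le_of_forall_projDimLE fun n h N _ _ _ => ?_
  exact .of_retract _ _ (Coinduced.eval_comp_of F.π F.π_mul_smul_one hπ)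
    ((F.projDimLE_iff_projDimLE_restrict hF n).1 (h (Coinduced A B N) F.finite_coinduced))

end FrobeniusSystem

lemma quotient_out_inv_mul_mem_iff {G : Type*} [Group G] {H : Subgroup G} (q : G ⧸ H) (y : G) :
    q.out⁻¹ * y ∈ H ↔ q = y := by
  rw [← QuotientGroup.eq, QuotientGroup.out_eq']

lemma mul_quotient_out_mem_iff {G : Type*} [Group G] {H : Subgroup G} (q : G ⧸ H) (y : G) :
    y * q.out ∈ H ↔ q = (y⁻¹ : G) := by
  rw [← quotient_out_inv_mul_mem_iff, ← inv_mem_iff, mul_inv_rev]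

namespace SGA

variable {k : Type} [CommRing k] {Λ : Type} [Ring Λ] [Algebra k Λ]
variable {G : Type} [Group G] [Fintype G] {σ : G →* (Λ ≃ₐ[k] Λ)}

lemma toFun_sum {ι : Type*} (s : Finset ι) (f : ι → SGA σ) (g : G) :
    (∑ i ∈ s, f i).toFun g = ∑ i ∈ s, (f i).toFun g :=
  map_sum (AddMonoidHom.mk' (fun x : SGA σ => x.toFun g) fun x y => toFun_add x y g) f s

/-- The group element `1 ⊗ g`. -/
def single (σ : G →* (Λ ≃ₐ[k] Λ)) (g : G) : SGA σ := ⟨fun x => if x = g then 1 else 0⟩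

lemma mul_single_toFun (x : SGA σ) (g y : G) : (x * single σ g).toFun y = x.toFun (y * g⁻¹) := by
  rw [toFun_mul, Finset.sum_eq_single (y * g⁻¹)]
  · simp [single]
  · intro h _ hne
    have : h⁻¹ * y ≠ g := by
      rintro rfl
      simp at hne
    simp [single, this]
  · simp

lemma single_mul_toFun (x : SGA σ) (g y : G) :
    (single σ g * x).toFun y = σ g (x.toFun (g⁻¹ * y)) := by
  rw [toFun_mul, Finset.sum_eq_single g]
  · simp [single]
  · intro h _ hne
    simp [single, hne]
  · simp

lemma single_mul_single_inv (g : G) : single σ g * single σ g⁻¹ = 1 := by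
  ext y
  rw [mul_single_toFun, toFun_one]
  simp [single]

variable (H : Subgroup G) [Fintype H]

instance : Module (SGA (σ.comp H.subtype)) (SGA σ) := Module.compHom _ (subEmb σ H)

instance : IsScalarTower (SGA (σ.comp H.subtype)) (SGA σ) (SGA σ) :=
  ⟨fun a x y => mul_assoc (subEmb σ H a) x y⟩

variable {H}

lemma smul_def (a : SGA (σ.comp H.subtype)) (x : SGA σ) : a • x = subEmb σ H a * x := rfl

lemma subEmb_toFun_coe (a : SGA (σ.comp H.subtype)) (h : H) :
    (subEmb σ H a).toFun h = a.toFun h :=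
  dif_pos h.2

lemma subEmb_toFun_of_notMem (a : SGA (σ.comp H.subtype)) {g : G} (hg : g ∉ H) :
    (subEmb σ H a).toFun g = 0 :=
  dif_neg hg

lemma subEmb_mul_toFun_coe (a : SGA (σ.comp H.subtype)) (x : SGA σ) (h : H) :
    (subEmb σ H a * x).toFun h = ∑ u : H, a.toFun u * σ u (x.toFun (u⁻¹ * h : H)) := by
  rw [toFun_mul]
  refine (Fintype.sum_of_injective Subtype.val Subtype.val_injective _ _ (fun g hg => ?_)
    fun u => ?_).symm
  · rw [subEmb_toFun_of_notMem a (by simpa using hg), zero_mul]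
  · rw [subEmb_toFun_coe]
    rfl

lemma mul_subEmb_toFun_coe (a : SGA (σ.comp H.subtype)) (x : SGA σ) (h : H) :
    (x * subEmb σ H a).toFun h = ∑ u : H, x.toFun u * σ u (a.toFun (u⁻¹ * h)) := by
  rw [toFun_mul]
  refine (Fintype.sum_of_injective Subtype.val Subtype.val_injective _ _ (fun g hg => ?_)
    fun u => ?_).symm
  · have : g⁻¹ * (h : G) ∉ H := by
      rw [H.mul_mem_cancel_right h.2, inv_mem_iff]
      simpa using hg
    rw [subEmb_toFun_of_notMem a this, map_zero, mul_zero]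
  · rw [← subEmb_toFun_coe a]
    rfl

variable (σ H) in
/-- The bimodule map `ΛG → ΛH` restricting coefficient functions to `H`. -/
def proj : SGA σ →ₗ[SGA (σ.comp H.subtype)] SGA (σ.comp H.subtype) where
  toFun x := ⟨fun h => x.toFun h⟩
  map_add' _ _ := rfl
  map_smul' a x := SGA.ext (subEmb_mul_toFun_coe a x)

lemma proj_toFun (x : SGA σ) (h : H) : (proj σ H x).toFun h = x.toFun h := rfl

lemma proj_mul_smul_one (x : SGA σ) (a : SGA (σ.comp H.subtype)) :
    proj σ H (x * a • 1) = proj σ H x * a := by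
  rw [smul_def, mul_one]
  exact SGA.ext (mul_subEmb_toFun_coe a x)

lemma subEmb_proj_toFun (x : SGA σ) (g : G) :
    (subEmb σ H (proj σ H x)).toFun g = if g ∈ H then x.toFun g else 0 := rfl

lemma proj_one : proj σ H 1 = 1 := by
  ext h
  rw [proj_toFun, toFun_one, toFun_one]
  simp

lemma proj_mul_single_smul_toFun (x : SGA σ) (g y : G) :
    (proj σ H (x * single σ g) • single σ g⁻¹).toFun y = if y * g ∈ H then x.toFun y else 0 := by
  rw [smul_def, mul_single_toFun, subEmb_proj_toFun, mul_single_toFun]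
  simp

lemma single_mul_proj_smul_one_toFun (x : SGA σ) (g y : G) :
    (single σ g * (proj σ H (single σ g⁻¹ * x) • 1)).toFun y =
      if g⁻¹ * y ∈ H then x.toFun y else 0 := by
  rw [smul_def, mul_one, single_mul_toFun, subEmb_proj_toFun, single_mul_toFun, apply_ite (σ g),
    map_zero, ← AlgEquiv.mul_apply, ← map_mul]
  simp

variable (σ H) in
/-- The Frobenius system of `ΛH ⊆ ΛG`, with dual bases given by representatives of the cosets
`gH`. -/
def frobeniusSystem : FrobeniusSystem (SGA (σ.comp H.subtype)) (SGA σ) (G ⧸ H) where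
  π := proj σ H
  π_mul_smul_one := proj_mul_smul_one
  b q := single σ q.out
  c q := single σ q.out⁻¹
  sum_π_mul_smul x := by
    ext y
    simp only [toFun_sum, proj_mul_single_smul_toFun, mul_quotient_out_mem_iff, Finset.sum_ite_eq',
      Finset.mem_univ, if_true]
  sum_mul_π_smul_one x := by
    ext y
    simp only [toFun_sum, single_mul_proj_smul_one_toFun, quotient_out_inv_mul_mem_iff,
      Finset.sum_ite_eq', Finset.mem_univ, if_true]

lemma frobeniusSystem_index : (frobeniusSystem σ H).index = H.index := by
  simp only [FrobeniusSystem.index, frobeniusSystem, single_mul_single_inv, Finset.sum_const,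
    Finset.card_univ, nsmul_one, Subgroup.index, Nat.card_eq_fintype_card]

lemma isUnit_frobeniusSystem_index (h : IsUnit (H.index : Λ)) :
    IsUnit (frobeniusSystem σ H).index := by
  rw [frobeniusSystem_index, ← map_natCast (emb σ)]
  exact h.map (emb σ)

end SGA

theorem skew_group_algebra_projective_restriction_general
    {k : Type} [CommRing k] {Λ : Type} [Ring Λ] [Algebra k Λ]
    {G : Type} [Group G] [Fintype G] (σ : G →* (Λ ≃ₐ[k] Λ))
    (H : Subgroup G) [Fintype H] (hind : IsUnit (H.index : Λ)) :
    (∀ (M : Type) [AddCommGroup M] [Module (SGA σ) M],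
      Module.Projective (SGA σ) M ↔
        Module.Projective (SGA (σ.comp H.subtype)) (Res (SGA.subEmb σ H) M)) ∧
    globalDim (SGA σ) = globalDim (SGA (σ.comp H.subtype)) := by
  let F := SGA.frobeniusSystem σ H
  have hF : IsUnit F.index := SGA.isUnit_frobeniusSystem_index hind
  refine ⟨fun M _ _ => ?_, le_antisymm (F.globalDim_le_globalDim_base hF)
    (F.globalDim_base_le_globalDim hF SGA.proj_one)⟩
  let : Module (SGA (σ.comp H.subtype)) M := Module.compHom M (SGA.subEmb σ H)
  have : IsScalarTower (SGA (σ.comp H.subtype)) (SGA σ) M :=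
    ⟨fun a x m => mul_smul (SGA.subEmb σ H a) x m⟩
  exact F.projective_iff_projective_restrict hF

/-- Let `H ≤ G` be a subgroup with `|G:H|` invertible in `k`. Then a finitely
generated `ΛG`-module `M` is projective iff its restriction to `ΛH` is projective; consequently
`ΛG` and `ΛH` have equal global dimension. -/
theorem skew_group_algebra_projective_restriction
    (k : Type) [Field k] [IsAlgClosed k] (p : ℕ) [CharP k p]
    (Λ : Type) [Ring Λ] [Algebra k Λ] [FiniteDimensional k Λ]
    (hconn : IsConnectedRing Λ) (hbasic : IsBasicRing Λ)
    (G : Type) [Group G] [Fintype G] (σ : G →* (Λ ≃ₐ[k] Λ))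
    (H : Subgroup G) [Fintype H] (hind : IsUnit ((H.index : k))) :
    (∀ (M : Type) [AddCommGroup M] [Module (SGA σ) M], Module.Finite (SGA σ) M →
      (Module.Projective (SGA σ) M ↔
        Module.Projective (SGA (σ.comp H.subtype)) (Res (SGA.subEmb σ H) M))) ∧
    globalDim (SGA σ) = globalDim (SGA (σ.comp H.subtype)) := by
  have hindΛ : IsUnit (H.index : Λ) := by simpa using hind.map (algebraMap k Λ)
  have h := skew_group_algebra_projective_restriction_general σ H hindΛ
  exact ⟨fun M _ _ _ => h.1 M, h.2⟩
end
end

section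
/- Let S be a finite p-group acting on Λ by algebra automorphisms, where p = char k, and E = {e_1,...,e_n} a complete set of primitive orthogonal idempotents of Λ closed under the action of S, and suppose S acts freely on E. Then the regular module of the skew group algebra ΛS is isomorphic, as a ΛS-module, to the direct sum of |S| copies of the trivial ΛS-module Λ (the module Λ on which λ⊗g acts by λ·g(−)). -/
set_option maxHeartbeats 1000000

noncomputable section
open Finset
open scoped Classical


section TrivialModule

namespace SGA

variable {k : Type} [CommRing k] {Λ : Type} [Ring Λ] [Algebra k Λ]
variable {G : Type} [Group G] [Fintype G]

/-- The trivial `ΛG`-module: the vector space `Λ` with action `(λ ⊗ g) • μ = λ · g(μ)`. -/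
def TrivMod (σ : G →* (Λ ≃ₐ[k] Λ)) : Type := Λ

variable {σ : G →* (Λ ≃ₐ[k] Λ)}

instance : AddCommGroup (TrivMod σ) := inferInstanceAs (AddCommGroup Λ)

instance : SMul (SGA σ) (TrivMod σ) := ⟨fun f μ => ∑ g : G, f.toFun g * σ g μ⟩

lemma trivSmul_def (f : SGA σ) (μ : TrivMod σ) :
    f • μ = ∑ g : G, f.toFun g * σ g μ := rfl

instance : Module (SGA σ) (TrivMod σ) where
  one_smul μ := by
    rw [trivSmul_def]
    rw [Finset.sum_eq_single (1 : G)]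
    · exact (by simp [toFun_one] : ∀ ν : Λ, (1 : SGA σ).toFun 1 * σ 1 ν = ν) μ
    · intro b _ hb; simp [toFun_one, hb]
    · simp
  mul_smul f h μ := by
    rw [trivSmul_def, trivSmul_def, trivSmul_def]
    simp only [toFun_mul, Finset.sum_mul, map_sum, Finset.mul_sum, map_mul]
    rw [Finset.sum_comm]
    refine Finset.sum_congr rfl fun u _ => ?_
    rw [← Fintype.sum_equiv (Equiv.mulLeft u)
      (fun v => f.toFun u * σ u (h.toFun v) * σ (u * v) μ)
      (fun x => f.toFun u * σ u (h.toFun (u⁻¹ * x)) * σ x μ)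
      (fun v => by simp [Equiv.mulLeft])]
    refine Finset.sum_congr rfl fun v _ => ?_
    have h4 : σ u (σ v μ) = σ (u * v) μ := by rw [map_mul σ]; rfl
    rw [← h4, mul_assoc]
  smul_zero f := by
    rw [trivSmul_def]; change ∑ g : G, f.toFun g * σ g (0 : Λ) = (0 : Λ); simp
  smul_add f μ ν := by
    rw [trivSmul_def, trivSmul_def, trivSmul_def]
    exact (by simp [mul_add, Finset.sum_add_distrib] : ∀ a b : Λ,
      ∑ g : G, f.toFun g * σ g (a + b) =
        ∑ g : G, f.toFun g * σ g a + ∑ g : G, f.toFun g * σ g b) μ ν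
  add_smul f h μ := by
    rw [trivSmul_def, trivSmul_def, trivSmul_def]
    exact (by simp [add_mul, Finset.sum_add_distrib] : ∀ a : Λ,
      ∑ g : G, (f + h).toFun g * σ g a =
        ∑ g : G, f.toFun g * σ g a + ∑ g : G, h.toFun g * σ g a) μ
  zero_smul μ := by
    rw [trivSmul_def]
    exact (by simp : ∀ a : Λ, ∑ g : G, (0 : SGA σ).toFun g * σ g a = 0) μ

end SGA

end TrivialModule

/-!
Freeness gives a map `c` from the idempotents to `S` with `c (g e) = g c(e)`: fix one idempotent
in each orbit and record the group element carrying it to a given member of the orbit. The sums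
`ε h` of the idempotents with label `h` form a complete system of orthogonal idempotents, and
`S` permutes it regularly: `g (ε h) * ε (g h') = 0` for `h ≠ h'` because the labels differ, and two
systems with sum `1` related in this way coincide, so `g (ε h) = ε (g h)`.

The `ΛS`-linear map `ΛS → Λ^S` with `1 ↦ ε` therefore has matrix `(ε (g h))`. Its rows and columns
are complete systems of orthogonal idempotents, so its transpose is its inverse.
-/

section OrthogonalSystems

open scoped Matrix

variable {R ι κ : Type*}

lemma eq_of_sum_eq_one_of_mul_eq_zero [NonAssocSemiring R] [Fintype ι] {a b : ι → R}
    (ha : ∑ i, a i = 1) (hb : ∑ i, b i = 1) (hab : ∀ i j, i ≠ j → a i * b j = 0) : a = b := by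
  funext i
  calc a i = a i * ∑ j, b j := by rw [hb, mul_one]
    _ = a i * b i := by
      rw [Finset.mul_sum, Fintype.sum_eq_single i fun j hj ↦ hab i j hj.symm]
    _ = (∑ j, a j) * b i := by
      rw [Finset.sum_mul, Fintype.sum_eq_single i fun j hj ↦ hab j i hj]
    _ = b i := by rw [ha, one_mul]

lemma sum_mul_sum_eq_zero [NonUnitalNonAssocSemiring R] {a : ι → R} {b : κ → R} {s : Finset ι}
    {t : Finset κ} (h : ∀ i ∈ s, ∀ j ∈ t, a i * b j = 0) :
    (∑ i ∈ s, a i) * ∑ j ∈ t, b j = 0 := by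
  rw [Finset.sum_mul_sum]
  exact Finset.sum_eq_zero fun i hi ↦ Finset.sum_eq_zero fun j hj ↦ h i hi j hj

variable [Semiring R]

lemma completeOrthogonalIdempotents_sum_fiber [Fintype ι] [Fintype κ] [DecidableEq κ]
    {e : ι → R} (he : CompleteOrthogonalIdempotents e) (c : ι → κ) :
    CompleteOrthogonalIdempotents fun b ↦ ∑ i with c i = b, e i where
  idem _ := he.isIdempotentElem_sum
  ortho b b' hb := sum_mul_sum_eq_zero fun i hi j hj ↦ he.ortho <| by
    rintro rfl
    simp only [Finset.mem_filter, Finset.mem_univ, true_and] at hi hj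
    exact hb (hi.symm.trans hj)
  complete := (Finset.sum_fiberwise _ c e).trans he.complete

lemma mul_transpose_eq_one_of_orthogonalIdempotents [DecidableEq ι] [Fintype κ]
    {u : Matrix ι κ R} (hrow : ∀ i, ∑ j, u i j = 1)
    (hcol : ∀ j, OrthogonalIdempotents fun i ↦ u i j) :
    u * uᵀ = 1 := by
  ext i l
  rw [Matrix.mul_apply, Matrix.one_apply]
  split_ifs with hil
  · subst hil
    exact (Finset.sum_congr rfl fun j _ ↦ (hcol j).idem i).trans (hrow i)
  · exact Finset.sum_eq_zero fun j _ ↦ (hcol j).ortho hil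

lemma bijective_vecMul_of_completeOrthogonalIdempotents [Fintype ι] [Fintype κ]
    {u : Matrix ι κ R} (hrow : ∀ i, CompleteOrthogonalIdempotents (u i))
    (hcol : ∀ j, CompleteOrthogonalIdempotents (uᵀ j)) :
    Function.Bijective fun x : ι → R ↦ x ᵥ* u := by
  have h : u * uᵀ = 1 := mul_transpose_eq_one_of_orthogonalIdempotents
    (fun i ↦ (hrow i).complete) fun j ↦ (hcol j).toOrthogonalIdempotents
  have h' : uᵀ * u = 1 := mul_transpose_eq_one_of_orthogonalIdempotents
    (fun j ↦ (hcol j).complete) fun i ↦ (hrow i).toOrthogonalIdempotents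
  refine Function.bijective_iff_has_inverse.2 ⟨fun y ↦ y ᵥ* uᵀ, fun x ↦ ?_, fun y ↦ ?_⟩
  · simp only [Matrix.vecMul_vecMul, h, Matrix.vecMul_one]
  · simp only [Matrix.vecMul_vecMul, h', Matrix.vecMul_one]

end OrthogonalSystems

lemma exists_map_smul_eq_mul_of_stabilizer_eq_bot (G α : Type*) [Group G] [MulAction G α] :
    ∃ c : α → G, ∀ a, MulAction.stabilizer G a = ⊥ → ∀ g, c (g • a) = g * c a := by
  let rep (a : α) : α := (Quotient.mk (MulAction.orbitRel G α) a).out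
  have hrep (a : α) : ∃ g : G, g • rep a = a := (MulAction.orbitRel G α).symm (Quotient.mk_out a)
  have rep_smul (g : G) (a : α) : rep (g • a) = rep a :=
    congrArg Quotient.out (Quotient.sound (MulAction.mem_orbit a g))
  choose c hc using hrep
  refine ⟨c, fun a ha g ↦ ?_⟩
  have hinv : (c a)⁻¹ • a = rep a := inv_smul_eq_iff.2 (hc a).symm
  have hfix : g⁻¹ * c (g • a) * (c a)⁻¹ ∈ MulAction.stabilizer G a := by
    rw [MulAction.mem_stabilizer_iff, mul_smul, mul_smul, hinv, ← rep_smul g, hc, inv_smul_smul]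
  rw [ha, Subgroup.mem_bot, mul_inv_eq_one] at hfix
  exact inv_mul_eq_iff_eq_mul.1 hfix

lemma IsCompletePrimitiveOrthogonalSystem.completeOrthogonalIdempotents {A : Type} [Ring A]
    {n : ℕ} {e : Fin n → A} (he : IsCompletePrimitiveOrthogonalSystem A e) :
    CompleteOrthogonalIdempotents e where
  idem i := (he.1 i).1
  ortho i j hij := he.2.1 i j hij
  complete := he.2.2

namespace SGA

variable {k Λ G : Type} [CommRing k] [Ring Λ] [Algebra k Λ] [Group G] {σ : G →* (Λ ≃ₐ[k] Λ)}

variable (σ) in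
lemma exists_map_apply_eq_mul_of_free :
    ∃ c : Λ → G, ∀ a, (∀ g, g ≠ 1 → σ g a ≠ a) → ∀ g, c (σ g a) = g * c a := by
  let _ : MulAction G Λ := MulAction.compHom Λ σ
  obtain ⟨c, hc⟩ := exists_map_smul_eq_mul_of_stabilizer_eq_bot G Λ
  refine ⟨c, fun a ha ↦ hc a ((Subgroup.eq_bot_iff_forall _).2 fun g hg ↦ ?_)⟩
  exact of_not_not fun hne ↦ ha g hne hg

lemma apply_sum_fiber [Finite G] {ι : Type*} [Fintype ι] {e : ι → Λ}
    (he : CompleteOrthogonalIdempotents e) (hclosed : ∀ g i, ∃ j, σ g (e i) = e j) {c : Λ → G}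
    (hc : ∀ g i, c (σ g (e i)) = g * c (e i)) (g h : G) :
    σ g (∑ i with c (e i) = h, e i) = ∑ i with c (e i) = g * h, e i := by
  cases nonempty_fintype G
  have hε := completeOrthogonalIdempotents_sum_fiber he fun i ↦ c (e i)
  have hsource := (hε.map (σ g : Λ →+* Λ)).complete
  have htarget := ((CompleteOrthogonalIdempotents.equiv (Equiv.mulLeft g)).2 hε).complete
  refine congrFun (eq_of_sum_eq_one_of_mul_eq_zero hsource htarget fun s t hne ↦ ?_) h
  change σ g (∑ i with c (e i) = s, e i) * ∑ j with c (e j) = g * t, e j = 0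
  rw [map_sum]
  refine sum_mul_sum_eq_zero fun i hi j hj ↦ ?_
  simp only [Finset.mem_filter, Finset.mem_univ, true_and] at hi hj
  obtain ⟨l, hl⟩ := hclosed g i
  have hcl : c (e l) = g * s := by rw [← hl, hc, hi]
  rw [hl]
  refine he.ortho fun hlj ↦ hne (mul_left_cancel (a := g) ?_)
  rw [← hcl, ← hj, hlj]

lemma bijective_toSpanSingleton [Fintype G] {ε : G → Λ} (hε : CompleteOrthogonalIdempotents ε)
    (hσ : ∀ g h, σ g (ε h) = ε (g * h)) :
    Function.Bijective (LinearMap.toSpanSingleton (SGA σ) (G → TrivMod σ) ε) := by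
  let u : Matrix G G Λ := Matrix.of fun g h ↦ ε (g * h)
  have hrow (g : G) : CompleteOrthogonalIdempotents (u g) :=
    (CompleteOrthogonalIdempotents.equiv (Equiv.mulLeft g)).2 hε
  have hcol (h : G) : CompleteOrthogonalIdempotents (u.transpose h) :=
    (CompleteOrthogonalIdempotents.equiv (Equiv.mulRight h)).2 hε
  have hmatrix : ⇑(LinearMap.toSpanSingleton (SGA σ) (G → TrivMod σ) ε) =
      (fun x : G → Λ ↦ Matrix.vecMul x u) ∘ equivFun := by
    funext f h
    exact Finset.sum_congr rfl fun g _ ↦ congrArg (f.toFun g * ·) (hσ g h)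
  rw [hmatrix]
  exact (bijective_vecMul_of_completeOrthogonalIdempotents hrow hcol).comp equivFun.bijective

end SGA

theorem skew_group_algebra_regular_module_general {k Λ S : Type} [CommRing k] [Ring Λ]
    [Algebra k Λ] [Group S] [Fintype S] {σ : S →* (Λ ≃ₐ[k] Λ)} {ι : Type*} [Fintype ι]
    {e : ι → Λ} (he : CompleteOrthogonalIdempotents e)
    (hclosed : ∀ g i, ∃ j, σ g (e i) = e j) (hfree : ∀ g, g ≠ 1 → ∀ i, σ g (e i) ≠ e i) :
    Nonempty (SGA σ ≃ₗ[SGA σ] (Fin (Fintype.card S) → SGA.TrivMod σ)) := by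
  obtain ⟨c, hc⟩ := SGA.exists_map_apply_eq_mul_of_free σ
  have hε := completeOrthogonalIdempotents_sum_fiber he fun i ↦ c (e i)
  have hσ := SGA.apply_sum_fiber he hclosed fun g i ↦ hc (e i) (fun h hh ↦ hfree h hh i) g
  exact ⟨(LinearEquiv.ofBijective _ (SGA.bijective_toSpanSingleton hε hσ)).trans
    (LinearEquiv.funCongrLeft (SGA σ) (SGA.TrivMod σ) (Fintype.equivFin S).symm)⟩

/-- Let `S` be a finite `p`-group (`p = char k`) acting on `Λ`, with a complete
set `E` of primitive orthogonal idempotents closed under the action of `S` on which `S` acts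
freely. Then the regular module of `ΛS` is isomorphic to the direct sum of `|S|` copies of the
trivial `ΛS`-module `Λ`. -/
theorem skew_group_algebra_regular_module
    (k : Type) [Field k] [IsAlgClosed k] (p : ℕ) [CharP k p]
    (Λ : Type) [Ring Λ] [Algebra k Λ] [FiniteDimensional k Λ]
    (hconn : IsConnectedRing Λ) (hbasic : IsBasicRing Λ)
    (S : Type) [Group S] [Fintype S] (hp : IsPGroup p S)
    (σ : S →* (Λ ≃ₐ[k] Λ))
    (n : ℕ) (e : Fin n → Λ)
    (hE : IsCompletePrimitiveOrthogonalSystem Λ e)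
    (hclosed : ∀ (g : S) (i : Fin n), ∃ j : Fin n, σ g (e i) = e j)
    (hfree : ∀ (g : S), g ≠ 1 → ∀ i : Fin n, σ g (e i) ≠ e i) :
    Nonempty ((SGA σ) ≃ₗ[SGA σ] (Fin (Fintype.card S) → SGA.TrivMod σ)) :=
  skew_group_algebra_regular_module_general hE.completeOrthogonalIdempotents hclosed hfree
end
end
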